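/- Let 0 < r* < A, λ > 0, define E1(x) = ∫_x^∞ e^{−z}/z dz for x > 0 and f_0(R) = (1 − e^{1/r*}·E1(1/r*))·(R − A) + ∫_{1/A}^{1/R} E1(x)·(e^x/x) dx. Suppose f : (0, A] → ℝ is bounded, continuous, twice continuously differentiable on (0, A), satisfies f(A) = 0, and solves −λ·f(R) + f′(R) + R²·f″(R) = e^{1/R}·E1(1/R) − e^{1/r*}·E1(1/r*) for all R ∈ (0, A). Then f satisfies the integral equation f(R) = f_0(R) − λ·∫_{1/A}^{1/R} (e^x/x²)·(∫_x^∞ e^{−z}·f(1/z) dz) dx for every R ∈ (0, A]. -/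

import Mathlib

open MeasureTheory Real Set

/-- The exponential integral `E1 x = ∫_x^∞ e^{-z}/z dz`. -/
noncomputable def E1 (x : ℝ) : ℝ := ∫ z in Set.Ioi x, Real.exp (-z) / z

lemma aux_congr {F F' : ℝ → ℝ} {d d' x : ℝ} (h : HasDerivAt F d x) (hF : F' = F)
    (hd : d' = d) : HasDerivAt F' d' x := by
  rw [hF, hd]; exact h

lemma aux_deriv (h : ℝ → ℝ) (b x : ℝ) (hx : b < x) (hc : ContinuousOn h (Ioi b))
    (hi : ∀ y, b < y → IntegrableOn h (Ioi y)) :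
    HasDerivAt (fun x => ∫ z in Ioi x, h z) (-h x) x := by
  obtain ⟨y, hby, hyx⟩ := exists_between hx
  have hca : ContinuousAt h x := hc.continuousAt (Ioi_mem_nhds hx)
  have hint : IntervalIntegrable h volume y x := by
    rw [intervalIntegrable_iff_integrableOn_Ioc_of_le hyx.le]
    exact (hi y hby).mono_set Ioc_subset_Ioi_self
  have hm : StronglyMeasurableAtFilter h (nhds x) :=
    hc.stronglyMeasurableAtFilter isOpen_Ioi x hx
  have h1 := intervalIntegral.integral_hasDerivAt_right hint hm hca
  have h2 : HasDerivAt (fun x => (∫ z in Ioi y, h z) - ∫ z in y..x, h z) (-h x) x :=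
    h1.const_sub _
  refine h2.congr_of_eventuallyEq ?_
  filter_upwards [Ioi_mem_nhds hyx] with w hw
  have := intervalIntegral.integral_Ioi_sub_Ioi (hi y hby) (le_of_lt hw)
  rw [← this]; ring

lemma aux_expint (x : ℝ) : IntegrableOn (fun z : ℝ => Real.exp (-z)) (Ioi x) :=
  integrableOn_exp_neg_Ioi x

lemma aux_int (h : ℝ → ℝ) (x C : ℝ) (hc : ContinuousOn h (Ioi x))
    (hb : ∀ z, x < z → |h z| ≤ C * Real.exp (-z)) : IntegrableOn h (Ioi x) := by
  refine Integrable.mono' ((aux_expint x).const_mul C)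
    (hc.aestronglyMeasurable measurableSet_Ioi) ?_
  filter_upwards [ae_restrict_mem measurableSet_Ioi] with z hz
  exact hb z hz

lemma aux_bd (h : ℝ → ℝ) (x C : ℝ)
    (hb : ∀ z, x < z → |h z| ≤ C * Real.exp (-z)) :
    |∫ z in Ioi x, h z| ≤ C * Real.exp (-x) := by
  have := norm_integral_le_of_norm_le (μ := volume.restrict (Ioi x)) (f := h)
    ((aux_expint x).const_mul C)
    (by filter_upwards [ae_restrict_mem measurableSet_Ioi] with z hz
        exact hb z hz)
  rw [integral_const_mul, integral_exp_neg_Ioi] at this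
  exact this

lemma aux_nonpos (g p : ℝ → ℝ) (a c M C : ℝ) (ha : 0 < a)
    (hg : ∀ x, a < x → HasDerivAt g (-p x / x ^ 2) x)
    (hC : ∀ x, a < x → |g x| ≤ C)
    (hp : ∀ x, a < x → |p x - c * Real.exp x| ≤ M) : c ≤ 0 := by
  by_contra! hc
  have ht := Real.tendsto_exp_div_pow_atTop 2
  have hev := (ht.eventually_ge_atTop ((1 + M / a ^ 2) / c)).and (Filter.eventually_gt_atTop a)
  obtain ⟨X, hX⟩ := Filter.eventually_atTop.1 hev
  have hd : ∀ x, X ≤ x → -p x / x ^ 2 ≤ -1 := by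
    intro x hx
    obtain ⟨h1, h2⟩ := hX x hx
    have hx0 : 0 < x := ha.trans h2
    have hM : 0 ≤ M := (abs_nonneg _).trans (hp x h2)
    have h3 := (abs_le.1 (hp x h2)).1
    rw [div_le_div_iff₀ hc (by positivity)] at h1
    have h4 : M ≤ M / a ^ 2 * x ^ 2 := by
      rw [div_mul_eq_mul_div, le_div_iff₀ (by positivity)]
      gcongr
    rw [div_le_iff₀ (by positivity)]
    nlinarith
  have hXa := (hX X le_rfl).2
  have key : ∀ y, X ≤ y → g y - g X ≤ -1 * (y - X) := by
    intro y hy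
    refine Convex.image_sub_le_mul_sub_of_deriv_le (convex_Ici X) ?_ ?_ ?_ X (by simp) y hy hy
    · intro z hz
      exact (hg z (hXa.trans_le hz)).continuousAt.continuousWithinAt
    · intro z hz
      rw [interior_Ici] at hz
      exact (hg z (hXa.trans hz)).differentiableAt.differentiableWithinAt
    · intro z hz
      rw [interior_Ici] at hz
      rw [(hg z (hXa.trans hz)).deriv]
      exact hd z (le_of_lt hz)
  have hC0 : 0 ≤ C := (abs_nonneg _).trans (hC X hXa)
  have h1 := key (X + 2 * C + 1) (by linarith)
  have h2 := abs_le.1 (hC X hXa)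
  have h3 := abs_le.1 (hC (X + 2 * C + 1) (by linarith))
  linarith [h2.1, h2.2, h3.1, h3.2]

lemma aux_zero (g p : ℝ → ℝ) (a c M C : ℝ) (ha : 0 < a)
    (hg : ∀ x, a < x → HasDerivAt g (-p x / x ^ 2) x)
    (hC : ∀ x, a < x → |g x| ≤ C)
    (hp : ∀ x, a < x → |p x - c * Real.exp x| ≤ M) : c = 0 := by
  refine le_antisymm (aux_nonpos g p a c M C ha hg hC hp) ?_
  have := aux_nonpos (fun x => -g x) (fun x => -p x) a (-c) M C ha
    (fun x hx => by
      have := (hg x hx).fun_neg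
      refine aux_congr this (by rfl) ?_; ring)
    (fun x hx => by simpa using hC x hx)
    (fun x hx => by
      rw [← abs_neg]; convert hp x hx using 2; ring_nf)
  linarith

lemma E1_bd (y : ℝ) (hx : 0 < y) (z : ℝ) (hz : y < z) :
    |Real.exp (-z) / z| ≤ 1 / y * Real.exp (-z) := by
  have : 0 < z := hx.trans hz
  rw [abs_of_pos (by positivity), div_eq_mul_one_div, mul_comm]
  gcongr

lemma E1_cont : ContinuousOn (fun z : ℝ => Real.exp (-z) / z) (Ioi 0) := by
  refine ContinuousOn.div (by fun_prop) (by fun_prop) ?_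
  intro x hx; exact ne_of_gt hx

lemma E1_deriv (x : ℝ) (hx : 0 < x) : HasDerivAt E1 (-(Real.exp (-x) / x)) x := by
  refine aux_deriv (fun z => Real.exp (-z) / z) 0 x hx E1_cont ?_
  intro y hy
  exact aux_int _ y (1 / y) (E1_cont.mono (Ioi_subset_Ioi hy.le)) (E1_bd y hy)

lemma E1_le (x : ℝ) (hx : 0 < x) : |E1 x| ≤ 1 / x * Real.exp (-x) :=
  aux_bd _ x (1 / x) (E1_bd x hx)

/-- Any bounded twice continuously differentiable solution of the ODE
`-λ f + f' + R² f'' = e^{1/R} E1(1/R) - e^{1/r*} E1(1/r*)` on `(0, A)` with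
`f(A) = 0` satisfies the integral equation
`f(R) = f_0(R) - λ ∫_{1/A}^{1/R} (e^x/x²) (∫_x^∞ e^{-z} f(1/z) dz) dx`. -/
theorem statement9 (rstar A lam : ℝ) (hrstar : 0 < rstar) (hrA : rstar < A)
    (hlam : 0 < lam)
    (f0 : ℝ → ℝ)
    (hf0 : ∀ R : ℝ, f0 R =
      (1 - Real.exp (1 / rstar) * E1 (1 / rstar)) * (R - A) +
        ∫ x in (1 / A)..(1 / R), E1 x * (Real.exp x / x))
    (f : ℝ → ℝ)
    (hbdd : ∃ C : ℝ, ∀ x ∈ Set.Ioc (0:ℝ) A, |f x| ≤ C)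
    (hcont : ContinuousOn f (Set.Ioc (0:ℝ) A))
    (hf1 : ∀ x ∈ Set.Ioo (0:ℝ) A, DifferentiableAt ℝ f x)
    (hf1c : ContinuousOn (deriv f) (Set.Ioo (0:ℝ) A))
    (hf2 : ∀ x ∈ Set.Ioo (0:ℝ) A, DifferentiableAt ℝ (deriv f) x)
    (hf2c : ContinuousOn (deriv (deriv f)) (Set.Ioo (0:ℝ) A))
    (hfA : f A = 0)
    (hode : ∀ x ∈ Set.Ioo (0:ℝ) A,
      -(lam * f x) + deriv f x + x ^ 2 * deriv (deriv f) x =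
        Real.exp (1 / x) * E1 (1 / x) - Real.exp (1 / rstar) * E1 (1 / rstar)) :
    ∀ R ∈ Set.Ioc (0:ℝ) A,
      f R = f0 R - lam * ∫ x in (1 / A)..(1 / R),
        (Real.exp x / x ^ 2) * (∫ z in Set.Ioi x, Real.exp (-z) * f (1 / z)) := by
  intro R hR
  obtain ⟨C, hC⟩ := hbdd
  have hA : 0 < A := hrstar.trans hrA
  obtain ⟨a, ha⟩ : ∃ a, a = 1 / A := ⟨_, rfl⟩
  have ha0 : 0 < a := by rw [ha]; positivity
  have haA : 1 / a = A := by rw [ha]; simp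
  obtain ⟨K, hK⟩ : ∃ K, K = Real.exp (1 / rstar) * E1 (1 / rstar) := ⟨_, rfl⟩
  obtain ⟨g, hg⟩ : ∃ g : ℝ → ℝ, g = fun z => f (1 / max z a) := ⟨_, rfl⟩
  have hmem : ∀ z, 1 / max z a ∈ Ioc (0:ℝ) A := by
    intro z
    have h1 : a ≤ max z a := le_max_right _ _
    have h2 : 0 < max z a := ha0.trans_le h1
    refine ⟨by positivity, ?_⟩
    rw [← haA]
    exact one_div_le_one_div_of_le ha0 h1
  have hgf : ∀ z, a ≤ z → g z = f (1 / z) := by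
    intro z hz; simp only [hg]; rw [max_eq_left hz]
  have hgc : Continuous g := by
    rw [hg]
    refine hcont.comp_continuous ?_ hmem
    refine Continuous.div continuous_const (by fun_prop) ?_
    intro z
    exact ne_of_gt (ha0.trans_le (le_max_right _ _))
  have hgb : ∀ z, |g z| ≤ C := by
    intro z; simp only [hg]; exact hC _ (hmem z)
  have hb : ∀ z, |Real.exp (-z) * g z| ≤ C * Real.exp (-z) := by
    intro z
    rw [abs_mul, abs_of_pos (Real.exp_pos _), mul_comm]
    gcongr
    exact hgb z
  have hec : Continuous (fun z => Real.exp (-z) * g z) := by fun_prop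
  obtain ⟨G, hG⟩ : ∃ G : ℝ → ℝ, G = fun x => ∫ z in Ioi x, Real.exp (-z) * g z := ⟨_, rfl⟩
  have hGd : ∀ x, HasDerivAt G (-(Real.exp (-x) * g x)) x := by
    intro x
    rw [hG]
    exact aux_deriv (fun z => Real.exp (-z) * g z) (x - 1) x (by linarith) hec.continuousOn
      (fun y _ => aux_int _ y C hec.continuousOn (fun z _ => hb z))
  have hGb : ∀ x, |G x| ≤ C * Real.exp (-x) := by
    intro x; rw [hG]; exact aux_bd _ x C (fun z _ => hb z)
  have hio : ∀ x, a < x → 1 / x ∈ Ioo (0:ℝ) A := by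
    intro x hx
    have : 0 < x := ha0.trans hx
    refine ⟨by positivity, ?_⟩
    rw [← haA]
    exact one_div_lt_one_div_of_lt ha0 hx
  have hinv : ∀ x, a < x → HasDerivAt (fun x : ℝ => 1 / x) (-1 / x ^ 2) x := by
    intro x hx
    have : x ≠ 0 := ne_of_gt (ha0.trans hx)
    have h := hasDerivAt_inv this
    refine aux_congr h (by funext z; simp) ?_
    ring
  obtain ⟨p, hp⟩ : ∃ p : ℝ → ℝ, p = fun x => deriv f (1 / x) := ⟨_, rfl⟩
  have hgd : ∀ x, a < x → HasDerivAt g (-p x / x ^ 2) x := by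
    intro x hx
    have h1 := HasDerivAt.comp x (hf1 _ (hio x hx)).hasDerivAt (hinv x hx)
    have h2 : HasDerivAt (fun z => f (1 / z)) (-p x / x ^ 2) x := by
      refine aux_congr h1 (by rfl) ?_
      rw [hp]; ring
    refine h2.congr_of_eventuallyEq ?_
    filter_upwards [Ioi_mem_nhds hx] with z hz
    exact hgf z (le_of_lt hz)
  have hpd : ∀ x, a < x → HasDerivAt p (p x - lam * g x - Real.exp x * E1 x + K) x := by
    intro x hx
    have h1 := HasDerivAt.comp x (hf2 _ (hio x hx)).hasDerivAt (hinv x hx)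
    have h2 := hode _ (hio x hx)
    have hx0 : x ≠ 0 := ne_of_gt (ha0.trans hx)
    rw [← hK, one_div_one_div, ← hgf x hx.le] at h2
    rw [hp]
    refine aux_congr h1 (by rfl) ?_
    have h3 : deriv (deriv f) (1 / x) * (-1 / x ^ 2)
      = -((1 / x) ^ 2 * deriv (deriv f) (1 / x)) := by ring
    rw [h3]
    simp only
    linarith
  obtain ⟨Q, hQ⟩ : ∃ Q : ℝ → ℝ, Q = fun x => Real.exp (-x) * p x - lam * G x
      - (Real.exp (-x) - x * E1 x) + K * Real.exp (-x) := ⟨_, rfl⟩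
  have hQd : ∀ x, a < x → HasDerivAt Q 0 x := by
    intro x hx
    have hx0 : 0 < x := ha0.trans hx
    have he : HasDerivAt (fun x : ℝ => Real.exp (-x)) (-Real.exp (-x)) x := by
      have := (hasDerivAt_neg x).exp
      refine aux_congr this (by rfl) ?_; ring
    have h := (((he.mul (hpd x hx)).sub ((hGd x).const_mul lam)).sub
      (he.sub ((hasDerivAt_id x).mul (E1_deriv x hx0)))).add (he.const_mul K)
    rw [hQ]
    refine aux_congr h (by rfl) ?_
    have hee : Real.exp (-x) * Real.exp x = 1 := by rw [← Real.exp_add]; simp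
    have hxx : x * (Real.exp (-x) / x) = Real.exp (-x) := by field_simp
    simp only [id]
    linear_combination (E1 x) * hee + hxx
  obtain ⟨c, hc⟩ : ∃ c, ∀ x, a < x → Q x = c := by
    refine ⟨Q (a + 1), fun x hx => ?_⟩
    refine isOpen_Ioi.is_const_of_deriv_eq_zero isPreconnected_Ioi ?_ ?_
      (show x ∈ Ioi a from hx) (show a + 1 ∈ Ioi a by simp)
    · intro z hz
      exact (hQd z hz).differentiableAt.differentiableWithinAt
    · intro z hz
      exact (hQd z hz).deriv
  have hpx : ∀ x, a < x → p x = c * Real.exp x + lam * (Real.exp x * G x) + 1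
      - Real.exp x * (x * E1 x) - K := by
    intro x hx
    have h := hc x hx
    rw [hQ] at h
    have hee : Real.exp (-x) * Real.exp x = 1 := by rw [← Real.exp_add]; simp
    simp only at h
    linear_combination Real.exp x * h + (1 - p x - K) * hee
  have hc0 : c = 0 := by
    refine aux_zero g p a c (lam * C + 1 + 1 + |K|) C ha0 hgd (fun x _ => hgb x) ?_
    intro x hx
    have hx0 : 0 < x := ha0.trans hx
    have hee : Real.exp (-x) * Real.exp x = 1 := by rw [← Real.exp_add]; simp
    have e1 : |Real.exp x * G x| ≤ C := by
      rw [abs_mul, abs_of_pos (Real.exp_pos _)]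
      calc Real.exp x * |G x| ≤ Real.exp x * (C * Real.exp (-x)) := by gcongr; exact hGb x
        _ = C := by linear_combination C * hee
    have e2 : |Real.exp x * (x * E1 x)| ≤ 1 := by
      rw [abs_mul, abs_mul, abs_of_pos (Real.exp_pos _), abs_of_pos hx0]
      calc Real.exp x * (x * |E1 x|) ≤ Real.exp x * (x * (1 / x * Real.exp (-x))) := by
            gcongr; exact E1_le x hx0
        _ = 1 := by
          rw [← mul_assoc x, mul_one_div_cancel hx0.ne']
          linear_combination hee
    have e3 := abs_le.1 e1
    have e4 := abs_le.1 e2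
    have e5 := neg_abs_le K
    have e6 := le_abs_self K
    rw [hpx x hx, abs_le]
    constructor <;> nlinarith [e3.1, e3.2, e4.1, e4.2]
  subst hc0
  have hR0 : 0 < R := hR.1
  have haR : a ≤ 1 / R := by
    rw [ha]; exact one_div_le_one_div_of_le hR0 hR.2
  obtain ⟨b, hbR⟩ : ∃ b, b = 1 / R := ⟨_, rfl⟩
  rw [← hbR] at haR
  have hE1c : ContinuousOn E1 (Icc a b) := fun x hx =>
    (E1_deriv x (ha0.trans_le hx.1)).continuousAt.continuousWithinAt
  have hGc : ContinuousOn G (Icc a b) := fun x _ => (hGd x).continuousAt.continuousWithinAt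
  have hne : ∀ x ∈ Icc a b, x ≠ 0 := fun x hx => ne_of_gt (ha0.trans_le hx.1)
  have hi1 : IntervalIntegrable (fun x => E1 x * (Real.exp x / x)) volume a b := by
    refine ContinuousOn.intervalIntegrable_of_Icc haR ?_
    exact hE1c.mul (ContinuousOn.div (by fun_prop) (by fun_prop) hne)
  have hi2 : IntervalIntegrable (fun x => Real.exp x / x ^ 2 * G x) volume a b := by
    refine ContinuousOn.intervalIntegrable_of_Icc haR ?_
    exact (ContinuousOn.div (by fun_prop) (by fun_prop)
      (fun x hx => pow_ne_zero 2 (hne x hx))).mul hGc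
  have hFTC := intervalIntegral.integral_eq_sub_of_hasDerivAt_of_le haR
    (f := fun x => g x - (1 - K) * (1 / x))
    (f' := fun x => E1 x * (Real.exp x / x) - lam * (Real.exp x / x ^ 2 * G x))
    (hgc.continuousOn.sub (continuousOn_const.mul
      (ContinuousOn.div (by fun_prop) (by fun_prop) hne)))
    (fun x hx => by
      have hx0 : x ≠ 0 := ne_of_gt (ha0.trans hx.1)
      have h := (hgd x hx.1).sub ((hinv x hx.1).const_mul (1 - K))
      refine aux_congr h (by rfl) ?_
      rw [hpx x hx.1]
      field_simp
      ring)
    (hi1.sub (hi2.const_mul lam))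
  rw [intervalIntegral.integral_sub hi1 (hi2.const_mul lam),
    intervalIntegral.integral_const_mul] at hFTC
  have hcongr : ∫ x in a..b, (Real.exp x / x ^ 2) *
      (∫ z in Set.Ioi x, Real.exp (-z) * f (1 / z)) = ∫ x in a..b, Real.exp x / x ^ 2 * G x := by
    refine intervalIntegral.integral_congr ?_
    intro x hx
    rw [uIcc_of_le haR] at hx
    simp only [hG]
    congr 1
    refine setIntegral_congr_fun measurableSet_Ioi ?_
    intro z hz
    simp only
    rw [hgf z (hx.1.trans (le_of_lt hz))]
  rw [hf0, ← hK, ← ha, ← hbR, hcongr]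
  have hb1 : 1 / b = R := by rw [hbR]; simp
  simp only [hgf a le_rfl, hgf b haR, haA, hb1, hfA] at hFTC
  linarith
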